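/- Let G = (V,E) be a triangle-free graph with maximum degree Δ, let 0 < β ≤ 1 and k ≥ Δ + 2/β. Let X be a uniformly random proper k-coloring of G. Then for every vertex v ∈ V, E[|A(X,v)|] ≥ k·(e^{−Δ/k} − β/2). -/

import Mathlib

/-!
Fix everything but the colors of the neighbors of `v`. As `N(v)` is independent, these colors are
then independent and uniform: each `w ∈ N(v)` takes a color from its set `S w` of available colors.
A color `c` is missed by all of them with probability
`∏ w, #(S w \ {c}) / #(S w) ≥ exp (-∑ w with c ∈ S w, 1 / (#(S w) - 1))`.
The sum of these probabilities over `c` is the conditional expectation of `|A(X, v)|`, and by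
Jensen's inequality it is at least `k * exp (-(∑ w, #(S w) / (#(S w) - 1)) / k)`.
Each quotient is at most `1 + β`, because `#(S w) ≥ k - Δ ≥ 1 + 1 / β`, and replacing `1 + β` by `1`
costs at most `β / 2`, because `x * exp (-x) ≤ 1 / 2`.
-/

open Finset

theorem card_nsmul_le_sum_of_fiberwise {α γ M : Type*} [DecidableEq γ] [AddCommMonoid M]
    [PartialOrder M] [IsOrderedAddMonoid M] (s : Finset α) (g : α → γ) (f : α → M) (m : M)
    (h : ∀ a ∈ s, #{x ∈ s | g x = g a} • m ≤ ∑ x ∈ s with g x = g a, f x) :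
    #s • m ≤ ∑ x ∈ s, f x := by
  have hmaps : ∀ x ∈ s, g x ∈ s.image g := fun _ => mem_image_of_mem g
  rw [card_eq_sum_card_image g s, sum_smul, ← sum_fiberwise_of_maps_to hmaps f]
  exact sum_le_sum (forall_mem_image.2 h)

section Inequalities

theorem exp_neg_sub_half_le_exp_neg_mul {β : ℝ} (hβ : 0 ≤ β) (x : ℝ) :
    Real.exp (-x) - β / 2 ≤ Real.exp (-((1 + β) * x)) := by
  have hx : x * Real.exp (-x) ≤ 1 / 2 :=
    (Real.mul_exp_neg_le_exp_neg_one x).trans Real.exp_neg_one_lt_half.le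
  calc Real.exp (-x) - β / 2
      ≤ Real.exp (-x) - β * (x * Real.exp (-x)) := by nlinarith
    _ = Real.exp (-x) * (-(β * x) + 1) := by ring
    _ ≤ Real.exp (-x) * Real.exp (-(β * x)) := by gcongr; exact Real.add_one_le_exp _
    _ = Real.exp (-((1 + β) * x)) := by rw [← Real.exp_add]; ring_nf

theorem card_mul_exp_sum_div_card_le_sum_exp {ι : Type*} (s : Finset ι) (f : ι → ℝ) :
    #s * Real.exp ((∑ i ∈ s, f i) / #s) ≤ ∑ i ∈ s, Real.exp (f i) := by
  rcases s.eq_empty_or_nonempty with rfl | hs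
  · simp
  have hcard : (0 : ℝ) < #s := by exact_mod_cast hs.card_pos
  have hJensen := convexOn_exp.map_sum_le (t := s) (w := fun _ => (#s : ℝ)⁻¹) (p := f)
    (fun _ _ => by positivity) (by simp [hcard.ne']) (fun _ _ => Set.mem_univ _)
  simp only [smul_eq_mul, ← mul_sum] at hJensen
  rwa [le_inv_mul_iff₀ hcard, inv_mul_eq_div] at hJensen

theorem card_mul_exp_neg_le_card_erase {C : Type*} [DecidableEq C] {S : Finset C} (hS : 1 < #S)
    (c : C) :
    #S * Real.exp (-if c ∈ S then ((#S : ℝ) - 1)⁻¹ else 0) ≤ #(S.erase c) := by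
  split_ifs with hc
  · have hpos : (0 : ℝ) < #S - 1 := by rw [sub_pos]; exact_mod_cast hS
    rw [cast_card_erase_of_mem hc, Real.exp_neg, ← div_eq_mul_inv, div_le_iff₀ (Real.exp_pos _)]
    calc (#S : ℝ) = (#S - 1) * ((#S - 1 : ℝ)⁻¹ + 1) := by field_simp; ring
      _ ≤ (#S - 1) * Real.exp (#S - 1 : ℝ)⁻¹ := by gcongr; exact Real.add_one_le_exp _
  · simp [hc]

variable {ι C : Type*} [Fintype C] [DecidableEq C]

theorem sum_sum_ite_inv_card_sub_one_le {β : ℝ} (hβ : 0 < β) {s : Finset ι} {S : ι → Finset C}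
    (hS : ∀ w ∈ s, 1 + β⁻¹ ≤ #(S w)) :
    ∑ c, ∑ w ∈ s, (if c ∈ S w then ((#(S w) : ℝ) - 1)⁻¹ else 0) ≤ (1 + β) * #s := by
  rw [sum_comm, mul_comm, ← nsmul_eq_mul]
  refine sum_le_card_nsmul _ _ _ fun w hw => ?_
  have hinv : β⁻¹ ≤ #(S w) - 1 := by linarith [hS w hw]
  have hpos : (0 : ℝ) < #(S w) - 1 := (inv_pos.2 hβ).trans_le hinv
  calc ∑ c, (if c ∈ S w then ((#(S w) : ℝ) - 1)⁻¹ else 0)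
      = #(S w) * ((#(S w) : ℝ) - 1)⁻¹ := by simp
    _ = 1 + ((#(S w) : ℝ) - 1)⁻¹ := by field_simp; ring
    _ ≤ 1 + β := by gcongr; exact inv_le_of_inv_le₀ hβ hinv

theorem prod_card_mul_exp_neg_le_sum_prod_card_erase {β : ℝ} (hβ : 0 < β) {s : Finset ι}
    {S : ι → Finset C} (hS : ∀ w ∈ s, 1 + β⁻¹ ≤ #(S w)) :
    (∏ w ∈ s, #(S w)) * (Fintype.card C * Real.exp (-((1 + β) * (#s / Fintype.card C)))) ≤
      ∑ c, ∏ w ∈ s, (#((S w).erase c) : ℝ) := by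
  let loss (c : C) : ℝ := ∑ w ∈ s, if c ∈ S w then ((#(S w) : ℝ) - 1)⁻¹ else 0
  have hmissed (c : C) :
      (∏ w ∈ s, #(S w)) * Real.exp (-loss c) ≤ ∏ w ∈ s, (#((S w).erase c) : ℝ) := by
    rw [Nat.cast_prod, ← sum_neg_distrib, Real.exp_sum, ← prod_mul_distrib]
    refine prod_le_prod (fun _ _ => by positivity) fun w hw => ?_
    have hcard : (1 : ℝ) < #(S w) := by linarith [hS w hw, inv_pos.2 hβ]
    exact card_mul_exp_neg_le_card_erase (by exact_mod_cast hcard) c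
  have hloss : -((1 + β) * (#s / Fintype.card C)) ≤ (∑ c, -loss c) / Fintype.card C := by
    rw [sum_neg_distrib, neg_div, neg_le_neg_iff, ← mul_div_assoc]
    gcongr
    exact sum_sum_ite_inv_card_sub_one_le hβ hS
  have hmean : Fintype.card C * Real.exp (-((1 + β) * (#s / Fintype.card C))) ≤
      ∑ c, Real.exp (-loss c) :=
    calc _ ≤ Fintype.card C * Real.exp ((∑ c, -loss c) / Fintype.card C) := by gcongr
      _ ≤ _ := card_mul_exp_sum_div_card_le_sum_exp univ _
  calc (∏ w ∈ s, #(S w)) * (Fintype.card C * Real.exp (-((1 + β) * (#s / Fintype.card C))))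
      ≤ (∏ w ∈ s, #(S w)) * ∑ c, Real.exp (-loss c) :=
        mul_le_mul_of_nonneg_left hmean (Nat.cast_nonneg _)
    _ = ∑ c, (∏ w ∈ s, #(S w)) * Real.exp (-loss c) := mul_sum ..
    _ ≤ ∑ c, ∏ w ∈ s, (#((S w).erase c) : ℝ) := sum_le_sum fun c _ => hmissed c

end Inequalities

section IndependentChoices

variable {V C : Type*} [Fintype V] [DecidableEq V]

/-- The functions taking a value in `S w` at each `w ∈ s` and agreeing with `Y` outside `s`; for an
independent set `s` and a proper coloring `Y` with available colors `S`, these are the proper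
recolorings of `s`. -/
def piFinsetOn (s : Finset V) (S : V → Finset C) (Y : V → C) : Finset (V → C) :=
  Fintype.piFinset fun u => if u ∈ s then S u else {Y u}

theorem mem_piFinsetOn {s : Finset V} {S : V → Finset C} {X Y : V → C} :
    X ∈ piFinsetOn s S Y ↔ (∀ w ∈ s, X w ∈ S w) ∧ ∀ u ∉ s, X u = Y u := by
  simp only [piFinsetOn, Fintype.mem_piFinset]
  grind

theorem card_piFinsetOn (s : Finset V) (S : V → Finset C) (Y : V → C) :
    #(piFinsetOn s S Y) = ∏ w ∈ s, #(S w) := by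
  simp [piFinsetOn, apply_ite card]

variable [DecidableEq C]

theorem filter_forall_ne_piFinsetOn (s : Finset V) (S : V → Finset C) (Y : V → C) (c : C) :
    {X ∈ piFinsetOn s S Y | ∀ w ∈ s, X w ≠ c} = piFinsetOn s (fun w => (S w).erase c) Y := by
  ext X
  simp only [mem_filter, mem_piFinsetOn, mem_erase]
  grind

variable [Fintype C]

theorem sum_card_compl_image_piFinsetOn (s : Finset V) (S : V → Finset C) (Y : V → C) :
    ∑ X ∈ piFinsetOn s S Y, #(s.image X)ᶜ = ∑ c, ∏ w ∈ s, #((S w).erase c) := by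
  have hmissed (X : V → C) :
      (s.image X)ᶜ = univ.bipartiteAbove (fun X c => ∀ w ∈ s, X w ≠ c) X := by
    ext c; simp [mem_bipartiteAbove]
  simp_rw [hmissed, sum_card_bipartiteAbove_eq_sum_card_bipartiteBelow, bipartiteBelow,
    filter_forall_ne_piFinsetOn, card_piFinsetOn]

end IndependentChoices

section Colorings

variable {V : Type*} [Fintype V] (G : SimpleGraph V) [DecidableRel G.Adj]
  {C : Type*} [Fintype C] [DecidableEq C]

/-- The set `A(X, v)` of colors that `X` does not use on the neighbors of `v`. -/
def availableColors (X : V → C) (v : V) : Finset C :=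
  ((G.neighborFinset v).image X)ᶜ

variable {G}

theorem mem_availableColors {X : V → C} {v : V} {c : C} :
    c ∈ availableColors G X v ↔ ∀ w, G.Adj v w → X w ≠ c := by
  simp [availableColors]

theorem card_le_card_availableColors_add_degree (X : V → C) (v : V) :
    Fintype.card C ≤ #(availableColors G X v) + G.degree v := by
  rw [← tsub_le_iff_right, availableColors, card_compl]
  exact Nat.sub_le_sub_left card_image_le _

variable [DecidableEq V]

variable (G C) in
/-- The proper colorings of `G` with colors in `C`, as a finset of functions so that averages over
it are expectations with respect to a uniformly random proper coloring. -/
def properColorings : Finset (V → C) :=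
  {X | ∀ u v, G.Adj u v → X u ≠ X v}

theorem mem_properColorings {X : V → C} :
    X ∈ properColorings G C ↔ ∀ u v, G.Adj u v → X u ≠ X v := by
  simp [properColorings]

theorem properColorings_nonempty_of_degree_lt (h : ∀ v, G.degree v < Fintype.card C) :
    (properColorings G C).Nonempty := by
  have greedy (s : Finset V) : ∃ X : V → C, ∀ u ∈ s, ∀ v ∈ s, G.Adj u v → X u ≠ X v := by
    induction s using Finset.induction_on with
    | empty =>
      have hC (v : V) : Nonempty C := Fintype.card_pos_iff.1 ((Nat.zero_le _).trans_lt (h v))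
      exact ⟨fun v => (hC v).some, by simp⟩
    | insert a s _ ih =>
      obtain ⟨X, hX⟩ := ih
      obtain ⟨c, hc⟩ : (availableColors G X a).Nonempty := by
        have hle := card_le_card_availableColors_add_degree (G := G) X a
        exact card_pos.1 (by linarith [h a])
      rw [mem_availableColors] at hc
      refine ⟨Function.update X a c, fun u hu v hv huv => ?_⟩
      grind [Function.update_apply, huv.ne, huv.symm]
  obtain ⟨X, hX⟩ := greedy univ
  exact ⟨X, mem_properColorings.2 fun u v => hX u (mem_univ u) v (mem_univ v)⟩

theorem filter_restrict_compl_eq_piFinsetOn {s : Finset V} (hs : G.IsIndepSet s) {Y : V → C}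
    (hY : Y ∈ properColorings G C) :
    {X ∈ properColorings G C | sᶜ.restrict X = sᶜ.restrict Y} =
      piFinsetOn s (availableColors G Y) Y := by
  have hnotMem {u w : V} (hu : u ∈ s) (huw : G.Adj u w) : w ∉ s :=
    fun hw => hs hu hw huw.ne huw
  ext X
  simp only [mem_filter, mem_properColorings, funext_iff, restrict, Subtype.forall, mem_compl,
    mem_piFinsetOn, mem_availableColors] at hY ⊢
  refine and_congr_left fun hXY => ⟨fun hX u hu w huw => ?_, fun hX u w huw => ?_⟩
  · rw [← hXY w (hnotMem hu huw)]
    exact (hX u w huw).symm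
  · by_cases hu : u ∈ s
    · rw [hXY w (hnotMem hu huw)]
      exact (hX u hu w huw).symm
    by_cases hw : w ∈ s
    · rw [hXY u hu]
      exact hX w hw u huw.symm
    · rw [hXY u hu, hXY w hw]
      exact hY u w huw

theorem card_nsmul_le_sum_card_availableColors {β : ℝ} (hβ : 0 < β) {v : V}
    (hv : G.IsIndepSet (G.neighborSet v))
    (hdeg : ∀ w, G.Adj v w → G.degree w + 1 + β⁻¹ ≤ Fintype.card C) :
    #(properColorings G C) •
        (Fintype.card C * Real.exp (-((1 + β) * (G.degree v / Fintype.card C)))) ≤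
      ∑ X ∈ properColorings G C, (#(availableColors G X v) : ℝ) := by
  have hN : G.IsIndepSet (G.neighborFinset v) := by rwa [G.coe_neighborFinset]
  refine card_nsmul_le_sum_of_fiberwise _ (G.neighborFinset v)ᶜ.restrict _ _ fun Y hY => ?_
  have havailable : ∀ w ∈ G.neighborFinset v, 1 + β⁻¹ ≤ #(availableColors G Y w) := fun w hw => by
    have hcard : (Fintype.card C : ℝ) ≤ #(availableColors G Y w) + G.degree w := by
      exact_mod_cast card_le_card_availableColors_add_degree Y w
    linarith [hdeg w ((G.mem_neighborFinset v w).1 hw)]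
  have hsum := sum_card_compl_image_piFinsetOn (G.neighborFinset v) (availableColors G Y) Y
  rw [filter_restrict_compl_eq_piFinsetOn hN hY, card_piFinsetOn, nsmul_eq_mul]
  calc _ ≤ ∑ c, ∏ w ∈ G.neighborFinset v, (#((availableColors G Y w).erase c) : ℝ) :=
        prod_card_mul_exp_neg_le_sum_prod_card_erase hβ havailable
    _ = _ := by exact_mod_cast hsum.symm

theorem stmt_16_general {Δ : ℕ} (hΔ : ∀ v, G.degree v ≤ Δ) {β : ℝ} (hβ : 0 < β)
    (hC : Δ + 1 + β⁻¹ ≤ Fintype.card C) {v : V} (hv : G.IsIndepSet (G.neighborSet v)) :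
    Fintype.card C * (Real.exp (-(Δ : ℝ) / Fintype.card C) - β / 2) ≤
      (∑ X ∈ properColorings G C, (#(availableColors G X v) : ℝ)) / #(properColorings G C) := by
  have hΔ' (w : V) : (G.degree w : ℝ) ≤ Δ := by exact_mod_cast hΔ w
  have hΔC : Δ < Fintype.card C := by
    have : (Δ : ℝ) < Fintype.card C := by linarith [inv_pos.2 hβ]
    exact_mod_cast this
  have hpos : (0 : ℝ) < #(properColorings G C) := by
    exact_mod_cast (properColorings_nonempty_of_degree_lt fun w => (hΔ w).trans_lt hΔC).card_pos
  rw [le_div_iff₀' hpos, neg_div]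
  calc #(properColorings G C) * (Fintype.card C * (Real.exp (-(Δ / Fintype.card C)) - β / 2))
      ≤ #(properColorings G C) *
          (Fintype.card C * Real.exp (-((1 + β) * (Δ / Fintype.card C)))) := by
        gcongr; exact exp_neg_sub_half_le_exp_neg_mul hβ.le _
    _ ≤ #(properColorings G C) *
          (Fintype.card C * Real.exp (-((1 + β) * (G.degree v / Fintype.card C)))) := by
        gcongr; exact hΔ v
    _ ≤ ∑ X ∈ properColorings G C, (#(availableColors G X v) : ℝ) := by
        rw [← nsmul_eq_mul]
        exact card_nsmul_le_sum_card_availableColors hβ hv fun w _ => by linarith [hΔ' w]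

end Colorings

/-- **Expected number of available colors** (from the proof of Lemma 2.1).
For a triangle-free graph with maximum degree `Δ`, `0 < β ≤ 1` and `k ≥ Δ + 2/β`,
a uniformly random proper `k`-coloring `X` satisfies
`E[|A(X,v)|] ≥ k(e^{-Δ/k} - β/2)` for every vertex `v`. -/
theorem stmt_16 {V : Type*} [Fintype V] [DecidableEq V]
    (G : SimpleGraph V) [DecidableRel G.Adj]
    (Δ k : ℕ)
    (htriangle : G.CliqueFree 3)
    (hΔ : ∀ v, G.degree v ≤ Δ)
    (β : ℝ) (hβ0 : 0 < β) (hβ1 : β ≤ 1)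
    (hk : (k : ℝ) ≥ (Δ : ℝ) + 2 / β)
    -- the set of proper k-colorings
    (proper : Finset (V → Fin k))
    (hproper : proper = Finset.univ.filter fun X : V → Fin k =>
      ∀ u v, G.Adj u v → X u ≠ X v)
    -- A(X,v): the set of colors not appearing in the neighborhood of v
    (A : (V → Fin k) → V → Finset (Fin k))
    (hA : ∀ X v, A X v = Finset.univ.filter fun c => ∀ w ∈ G.neighborFinset v, X w ≠ c) :
    ∀ v : V,
      (∑ X ∈ proper, ((A X v).card : ℝ)) / (proper.card : ℝ)
        ≥ (k : ℝ) * (Real.exp (-(Δ : ℝ) / (k : ℝ)) - β / 2) := by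
  intro v
  obtain rfl : proper = properColorings G (Fin k) := hproper
  obtain rfl : A = availableColors G := by
    ext X w c
    simp [hA, mem_availableColors]
  have hk' : (Δ : ℝ) + 1 + β⁻¹ ≤ Fintype.card (Fin k) := by
    have : 1 ≤ β⁻¹ := (one_le_inv₀ hβ0).2 hβ1
    rw [Fintype.card_fin]
    linarith [div_eq_mul_inv 2 β]
  simpa only [Fintype.card_fin] using
    stmt_16_general hΔ hβ0 hk' (G.isIndepSet_neighborSet_of_triangleFree htriangle v)
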